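/- arXiv:2404.09800 — 2 statements merged into one kernel-verified Lean document; each statement's English description precedes it below -/
import Mathlib

section
/- For every α ∈ (0,1) and every u ∈ ℝ: (α/Γ(1−α)) · ∫₀^∞ v^{−(1+α)} (1 − e^{−i u v}) dv = |u|^α e^{i (πα/2) sgn(u)}, where the (absolutely convergent) integral is a complex-valued Lebesgue integral over (0,∞). -/
open Real
open scoped Topology

noncomputable section

open MeasureTheory Set Filter Asymptotics

/-!
Let `F z = ∫₀^∞ t ^ (s - 1) * (1 - e ^ (-z t)) dt` with `-1 < re s < 0`. The substitution
`t ↦ a t` gives `F a = F 1 * a ^ (-s)` for real `a > 0`. Since `F` is holomorphic for `0 < re z`,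
the identity theorem extends this to `F z = F 1 * z ^ (-s)`; comparing derivatives at `z = 1` gives
`-s * F 1 = ∫₀^∞ t ^ s * e ^ (-t) dt = Γ (s + 1)`, so `F 1 = -Γ s`. Both sides of
`F z = -Γ s * z ^ (-s)` are continuous for `0 ≤ re z`, so the identity holds up to the imaginary
axis; the theorem is the case `s = -α`, `z = i u`.
-/

/-- The Cauchy–Saalschütz integral `∫₀^∞ t ^ (s - 1) * (1 - e ^ (-z t)) dt`, regarded as a function
of `z`. It represents `-Γ(s) * z ^ (-s)` in the strip `-1 < re s < 0`, where Euler's integral for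
`Γ` diverges. -/
def saalschutzIntegral (s z : ℂ) : ℂ :=
  mellin (fun t : ℝ => 1 - Complex.exp (-(z * t))) s

section Convergence

lemma norm_one_sub_exp_le {w : ℂ} (hw : w.re ≤ 0) : ‖1 - Complex.exp w‖ ≤ 2 * min 1 ‖w‖ := by
  rcases le_total ‖w‖ 1 with h | h
  · rw [min_eq_right h, norm_sub_rev]
    exact Complex.norm_exp_sub_one_le h
  · have hexp : ‖Complex.exp w‖ ≤ 1 := by
      rw [Complex.norm_exp]
      exact Real.exp_le_one_iff.mpr hw
    rw [min_eq_left h]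
    linarith [norm_sub_le 1 (Complex.exp w), norm_one (α := ℂ)]

lemma min_one_mul_le {a t : ℝ} (ha : 0 ≤ a) (ht : 0 ≤ t) : min 1 (a * t) ≤ (1 + a) * min 1 t := by
  rcases le_total 1 t with h | h
  · rw [min_eq_left h]
    exact (min_le_left _ _).trans (by linarith)
  · rw [min_eq_right h]
    exact (min_le_right _ _).trans (by linarith)

lemma norm_cpow_smul_one_sub_exp_le (s : ℂ) {z : ℂ} (hz : 0 ≤ z.re) {t : ℝ} (ht : 0 < t) :
    ‖(t : ℂ) ^ (s - 1) • (1 - Complex.exp (-(z * t)))‖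
      ≤ 2 * (1 + ‖z‖) * (t ^ (s.re - 1) * min 1 t) := by
  have hre : (-(z * (t : ℂ))).re ≤ 0 := by simpa using mul_nonneg hz ht.le
  have hnorm : ‖-(z * (t : ℂ))‖ = ‖z‖ * t := by
    rw [norm_neg, norm_mul, Complex.norm_real, Real.norm_of_nonneg ht.le]
  rw [norm_smul, Complex.norm_cpow_eq_rpow_re_of_pos ht, Complex.sub_re, Complex.one_re]
  calc t ^ (s.re - 1) * ‖1 - Complex.exp (-(z * t))‖
      ≤ t ^ (s.re - 1) * (2 * ((1 + ‖z‖) * min 1 t)) := by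
        gcongr
        refine (norm_one_sub_exp_le hre).trans ?_
        rw [hnorm]
        gcongr
        exact min_one_mul_le (norm_nonneg z) ht.le
    _ = 2 * (1 + ‖z‖) * (t ^ (s.re - 1) * min 1 t) := by ring

lemma integrableOn_rpow_sub_one_mul_min_one {σ : ℝ} (hσ : σ ∈ Ioo (-1 : ℝ) 0) :
    IntegrableOn (fun t : ℝ => t ^ (σ - 1) * min 1 t) (Ioi 0) := by
  have hcont : Continuous fun t : ℝ => min 1 t := by fun_prop
  have htop : (fun t : ℝ => min 1 t) =O[atTop] (· ^ (-0 : ℝ)) := by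
    refine IsBigO.of_bound 1 ?_
    filter_upwards [eventually_ge_atTop 1] with t ht
    simp [min_eq_left ht]
  have hzero : (fun t : ℝ => min 1 t) =O[𝓝[>] 0] (· ^ (-(-1) : ℝ)) := by
    refine IsBigO.of_bound 1 ?_
    filter_upwards [Ioo_mem_nhdsGT (zero_lt_one (α := ℝ))] with t ht
    simp [min_eq_right ht.2.le]
  exact mellin_convergent_of_isBigO_scalar (hcont.locallyIntegrable.locallyIntegrableOn _)
    htop hσ.2 hzero hσ.1

lemma aestronglyMeasurable_cpow_smul_one_sub_exp (s z : ℂ) (μ : Measure ℝ) :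
    AEStronglyMeasurable (fun t : ℝ => (t : ℂ) ^ (s - 1) • (1 - Complex.exp (-(z * t)))) μ :=
  Measurable.aestronglyMeasurable (by fun_prop)

lemma mellinConvergent_one_sub_exp {s z : ℂ} (hs : s.re ∈ Ioo (-1 : ℝ) 0) (hz : 0 ≤ z.re) :
    MellinConvergent (fun t : ℝ => 1 - Complex.exp (-(z * t))) s := by
  refine Integrable.mono' ((integrableOn_rpow_sub_one_mul_min_one hs).const_mul (2 * (1 + ‖z‖)))
    (aestronglyMeasurable_cpow_smul_one_sub_exp s z _) ?_
  filter_upwards [ae_restrict_mem measurableSet_Ioi] with t ht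
  exact norm_cpow_smul_one_sub_exp_le s hz ht

end Convergence

section HalfPlane

variable {s : ℂ}

lemma continuousOn_saalschutzIntegral (hs : s.re ∈ Ioo (-1 : ℝ) 0) :
    ContinuousOn (saalschutzIntegral s) {z | 0 ≤ z.re} := by
  intro z _
  refine continuousWithinAt_of_dominated
    (bound := fun t => 2 * (1 + (‖z‖ + 1)) * (t ^ (s.re - 1) * min 1 t))
    (.of_forall fun w => aestronglyMeasurable_cpow_smul_one_sub_exp s w _) ?_
    ((integrableOn_rpow_sub_one_mul_min_one hs).const_mul _) (.of_forall fun t => ?_)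
  · have hnear : ∀ᶠ w in 𝓝[{z | 0 ≤ z.re}] z, ‖w‖ < ‖z‖ + 1 :=
      nhdsWithin_le_nhds (continuous_norm.continuousAt.eventually_lt_const (lt_add_one ‖z‖))
    filter_upwards [self_mem_nhdsWithin, hnear] with w hw hwz
    filter_upwards [ae_restrict_mem measurableSet_Ioi] with t ht
    have ht0 : 0 < t := ht
    refine (norm_cpow_smul_one_sub_exp_le s hw ht0).trans ?_
    gcongr
  · exact Continuous.continuousWithinAt (by fun_prop)

lemma hasDerivAt_saalschutzIntegral (hs : s.re ∈ Ioo (-1 : ℝ) 0) {z : ℂ} (hz : 0 < z.re) :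
    HasDerivAt (saalschutzIntegral s)
      (∫ t in Ioi (0 : ℝ), (t : ℂ) ^ s * Complex.exp (-(z * t))) z := by
  have hbound : IntegrableOn (fun t : ℝ => t ^ s.re * Real.exp (-(z.re / 2) * t)) (Ioi 0) := by
    simpa using integrableOn_rpow_mul_exp_neg_mul_rpow hs.1 one_pos (half_pos hz)
  have hnhds : {w : ℂ | z.re / 2 < w.re} ∈ 𝓝 z :=
    (isOpen_lt continuous_const Complex.continuous_re).mem_nhds (half_lt_self hz)
  refine (hasDerivAt_integral_of_dominated_loc_of_deriv_le hnhds
    (.of_forall fun w => aestronglyMeasurable_cpow_smul_one_sub_exp s w _)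
    (mellinConvergent_one_sub_exp hs hz.le) (Measurable.aestronglyMeasurable (by fun_prop))
    (F' := fun w t => (t : ℂ) ^ s * Complex.exp (-(w * t))) ?_ hbound ?_).2
  · filter_upwards [ae_restrict_mem measurableSet_Ioi] with t ht w hw
    have ht0 : 0 < t := ht
    have hdecay : -(w.re * t) ≤ -(z.re / 2) * t := by nlinarith [mem_ofPred.mp hw]
    rw [norm_mul, Complex.norm_cpow_eq_rpow_re_of_pos ht0, Complex.norm_exp, Complex.neg_re,
      Complex.re_mul_ofReal]
    gcongr
  · filter_upwards [ae_restrict_mem measurableSet_Ioi] with t ht w _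
    have ht0 : (t : ℂ) ≠ 0 := Complex.ofReal_ne_zero.mpr (ne_of_gt ht)
    have hexp : HasDerivAt (fun w : ℂ => 1 - Complex.exp (-(w * t)))
        (Complex.exp (-(w * t)) * t) w := by
      simpa using ((hasDerivAt_id w).mul_const (t : ℂ)).neg.cexp.const_sub 1
    refine (hexp.const_mul ((t : ℂ) ^ (s - 1))).congr_deriv ?_
    rw [Complex.cpow_sub _ _ ht0, Complex.cpow_one]
    field_simp

lemma saalschutzIntegral_ofReal (s : ℂ) {a : ℝ} (ha : 0 < a) :
    saalschutzIntegral s a = saalschutzIntegral s 1 * (a : ℂ) ^ (-s) := by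
  simpa [saalschutzIntegral, mul_comm] using
    mellin_comp_mul_left (fun t : ℝ => 1 - Complex.exp (-t)) s ha

lemma eqOn_saalschutzIntegral_one_mul_cpow (hs : s.re ∈ Ioo (-1 : ℝ) 0) :
    EqOn (saalschutzIntegral s) (fun z => saalschutzIntegral s 1 * z ^ (-s)) {z | 0 < z.re} := by
  have hopen : IsOpen {z : ℂ | 0 < z.re} := isOpen_lt continuous_const Complex.continuous_re
  have h_analytic : AnalyticOnNhd ℂ (saalschutzIntegral s) {z | 0 < z.re} :=
    DifferentiableOn.analyticOnNhd
      (fun z hz => (hasDerivAt_saalschutzIntegral hs hz).differentiableAt.differentiableWithinAt)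
      hopen
  have hpow : AnalyticOnNhd ℂ (fun z => saalschutzIntegral s 1 * z ^ (-s)) {z | 0 < z.re} :=
    fun z hz => analyticAt_const.mul (analyticAt_id.cpow analyticAt_const (Or.inl hz))
  have hreal : Tendsto ((↑) : ℝ → ℂ) (𝓝[≠] 1) (𝓝[≠] 1) :=
    (Complex.continuous_ofReal.tendsto' 1 1 Complex.ofReal_one).inf
      (tendsto_principal_principal.mpr fun a ha => by simpa using ha)
  have hfreq : ∃ᶠ a : ℝ in 𝓝[≠] 1,
      saalschutzIntegral s a = saalschutzIntegral s 1 * (a : ℂ) ^ (-s) :=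
    Eventually.frequently <| nhdsWithin_le_nhds <|
      (lt_mem_nhds zero_lt_one).mono fun a ha => saalschutzIntegral_ofReal s ha
  exact h_analytic.eqOn_of_preconnected_of_frequently_eq hpow
    (convex_halfSpace_re_gt 0).isPreconnected (by simp) (hreal.frequently hfreq)

lemma saalschutzIntegral_one (hs : s.re ∈ Ioo (-1 : ℝ) 0) :
    saalschutzIntegral s 1 = -Complex.Gamma s := by
  have hs0 : s ≠ 0 := by
    rintro rfl
    exact lt_irrefl _ hs.2
  have hGamma : (∫ t in Ioi (0 : ℝ), (t : ℂ) ^ s * Complex.exp (-(1 * t)))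
      = Complex.Gamma (s + 1) := by
    rw [Complex.Gamma_eq_integral (by simpa using neg_lt_iff_pos_add.mp hs.1)]
    simp [Complex.GammaIntegral, mul_comm]
  have hpow : HasDerivAt (saalschutzIntegral s) (saalschutzIntegral s 1 * -s) 1 := by
    have h := ((hasDerivAt_id (1 : ℂ)).cpow_const (c := -s) (by simp)).const_mul
      (saalschutzIntegral s 1)
    refine (h.congr_of_eventuallyEq ?_).congr_deriv (by simp)
    exact (eqOn_saalschutzIntegral_one_mul_cpow hs).eventuallyEq_of_mem
      ((isOpen_lt continuous_const Complex.continuous_re).mem_nhds (by simp))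
  have hderiv := (hasDerivAt_saalschutzIntegral hs (by simp)).unique hpow
  rw [hGamma, Complex.Gamma_add_one s hs0] at hderiv
  exact mul_left_cancel₀ hs0 (by linear_combination hderiv)

lemma saalschutzIntegral_eq_neg_Gamma_mul_cpow (hs : s.re ∈ Ioo (-1 : ℝ) 0) {z : ℂ}
    (hz : 0 ≤ z.re) :
    saalschutzIntegral s z = -Complex.Gamma s * z ^ (-s) := by
  have hpow : ContinuousOn (fun z : ℂ => saalschutzIntegral s 1 * z ^ (-s)) {z | 0 ≤ z.re} :=
    fun z hz => (continuousAt_const.mul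
      (Complex.continuousAt_cpow_const_of_re_pos (Or.inl hz)
        (by simpa using hs.2))).continuousWithinAt
  rw [← saalschutzIntegral_one hs]
  exact (eqOn_saalschutzIntegral_one_mul_cpow hs).of_subset_closure
    (continuousOn_saalschutzIntegral hs) hpow (fun _ hw => (mem_ofPred.mp hw).le)
    (Complex.closure_setOfPred_lt_re 0).ge hz

end HalfPlane

lemma arg_I_mul_ofReal (u : ℝ) : (Complex.I * (u : ℂ)).arg = π / 2 * Real.sign u := by
  rcases lt_trichotomy u 0 with h | rfl | h
  · have hneg : Complex.I * (u : ℂ) = ((-u : ℝ) : ℂ) * -Complex.I := by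
      push_cast
      ring
    rw [hneg, Complex.arg_real_mul _ (neg_pos.mpr h), Complex.arg_neg_I, Real.sign_of_neg h]
    ring
  · simp
  · rw [mul_comm, Complex.arg_real_mul _ h, Complex.arg_I, Real.sign_of_pos h, mul_one]

lemma I_mul_ofReal_cpow_ofReal (u α : ℝ) :
    (Complex.I * (u : ℂ)) ^ (α : ℂ) = ((|u| ^ α : ℝ) : ℂ) *
      Complex.exp (Complex.I * ((π * α / 2 * Real.sign u : ℝ) : ℂ)) := by
  have hangle : π / 2 * Real.sign u * α = π * α / 2 * Real.sign u := by ring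
  rw [Complex.cpow_ofReal, arg_I_mul_ofReal, hangle, norm_mul, Complex.norm_I, one_mul,
    Complex.norm_real, Real.norm_eq_abs, mul_comm Complex.I, Complex.exp_mul_I,
    ← Complex.ofReal_cos, ← Complex.ofReal_sin]

theorem stmt_13_general {s z : ℂ} (hs : s.re ∈ Ioo (0 : ℝ) 1) (hz : 0 ≤ z.re) :
    s / Complex.Gamma (1 - s) *
        ∫ v in Ioi (0 : ℝ), (v : ℂ) ^ (-(1 + s)) * (1 - Complex.exp (-(z * v)))
      = z ^ s := by
  have h_integral : (∫ v in Ioi (0 : ℝ), (v : ℂ) ^ (-(1 + s)) * (1 - Complex.exp (-(z * v))))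
      = saalschutzIntegral (-s) z := by
    simp only [saalschutzIntegral, mellin, smul_eq_mul, neg_add_rev, sub_eq_add_neg]
  have hs0 : -s ≠ 0 := by
    refine neg_ne_zero.mpr ?_
    rintro rfl
    exact lt_irrefl _ hs.1
  have hΓ : Complex.Gamma (1 - s) ≠ 0 :=
    Complex.Gamma_ne_zero_of_re_pos (by simpa using hs.2)
  have hrec : Complex.Gamma (1 - s) = -s * Complex.Gamma (-s) := by
    rw [← Complex.Gamma_add_one (-s) hs0, neg_add_eq_sub]
  rw [h_integral, saalschutzIntegral_eq_neg_Gamma_mul_cpow (by simpa using hs.symm) hz, neg_neg]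
  field_simp
  rw [hrec]
  ring

/-- Lemma 5.1. For `0 < α < 1` and `u ∈ ℝ`,
`(α/Γ(1−α)) ∫₀^∞ v^{−(1+α)} (1 − e^{−iuv}) dv = |u|^α e^{i(πα/2) sgn u}`. -/
theorem stmt_13 (α : ℝ) (hα : α ∈ Set.Ioo (0 : ℝ) 1) (u : ℝ) :
    ((α / Real.Gamma (1 - α) : ℝ) : ℂ) *
        ∫ v in Set.Ioi (0 : ℝ),
          ((v ^ (-(1 + α)) : ℝ) : ℂ) * (1 - Complex.exp (-(Complex.I * (u : ℂ) * (v : ℂ))))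
      = ((|u| ^ α : ℝ) : ℂ) *
          Complex.exp (Complex.I * ((π * α / 2 * Real.sign u : ℝ) : ℂ)) := by
  rw [← I_mul_ofReal_cpow_ofReal, ← stmt_13_general (by simpa using hα) (by simp)]
  congr 1
  · simp [← Complex.Gamma_ofReal]
  · refine setIntegral_congr_fun measurableSet_Ioi fun v hv => ?_
    simp [Complex.ofReal_cpow (le_of_lt hv)]
end
end

section
/- For every real a > 0, every x ∈ ℝ and every nonnegative integer m: ∫_ℝ t^m e^{−a t²/2} e^{i x t} dt = e^{−x²/(2a)} · ∫_ℝ (t + i x/a)^m e^{−a t²/2} dt, where both sides are (absolutely convergent) complex-valued Lebesgue integrals over ℝ. -/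
noncomputable section

/-!
Integrating polynomials against `e^{-at²/2 + ct}` gives a linear functional `L` on `ℂ[X]`, and
integration by parts is Stein's identity `L(X p) = (c/a) L(p) + (1/a) L(p')`. This recurrence
determines `L` up to the scalar `L(1)`. Translating polynomials by `s` adds `s` to the mean in
Stein's identity, so the functional for `c` and the translate by `c/a` of the functional for
`c = 0` satisfy the same identity; they differ by the ratio of their values at `1`, which is
`e^{c²/(2a)}`. The Fourier case is `c = ix`.
-/

open MeasureTheory Complex Polynomial

section SteinIdentity

variable {R M : Type*} [CommSemiring R] [AddCommMonoid M] [Module R M]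
  {μ v : R} {L L' : R[X] →ₗ[R] M}

/-- Stein's identity `L(X p) = μ L(p) + v L(p')`, which the expectation of polynomials under the
Gaussian law of mean `μ` and variance `v` satisfies. -/
def SteinIdentity (μ v : R) (L : R[X] →ₗ[R] M) : Prop :=
  ∀ p, L (X * p) = μ • L p + v • L (derivative p)

namespace SteinIdentity

theorem ext (hL : SteinIdentity μ v L) (hL' : SteinIdentity μ v L') (h_one : L 1 = L' 1) :
    L = L' := by
  have h_pow (n : ℕ) : L (X ^ n) = L' (X ^ n) := by
    induction n using Nat.strong_induction_on with
    | _ n ih =>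
      cases n with
      | zero => simpa using h_one
      | succ n =>
        have h_deriv : L (derivative (X ^ n)) = L' (derivative (X ^ n)) := by
          rw [derivative_X_pow, ← smul_eq_C_mul, map_smul, map_smul, ih (n - 1) (by lia)]
        rw [pow_succ', hL, hL', ih n n.lt_succ_self, h_deriv]
  refine lhom_ext' fun n => LinearMap.ext_ring ?_
  simpa only [LinearMap.comp_apply, monomial_one_right_eq_X_pow] using h_pow n

theorem const_smul (hL : SteinIdentity μ v L) (r : R) : SteinIdentity μ v (r • L) := fun p => by
  simp only [LinearMap.smul_apply, hL p, smul_add, smul_comm r]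

theorem comp_taylor (hL : SteinIdentity μ v L) (s : R) :
    SteinIdentity (μ + s) v (L ∘ₗ taylor s) := fun p => by
  have h_deriv : taylor s (derivative p) = derivative (taylor s p) := by
    simp [taylor_apply, derivative_comp]
  simp only [LinearMap.comp_apply, taylor_mul, taylor_X, h_deriv, add_mul, map_add,
    ← smul_eq_C_mul, map_smul, add_smul, hL (taylor s p)]
  abel

end SteinIdentity

end SteinIdentity

/-- The Gaussian `e^{-at²/2}` tilted by the exponential `e^{ct}`, with complex parameters. -/
def tiltedGaussian (a c : ℂ) (t : ℝ) : ℂ :=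
  cexp (-(a / 2) * t ^ 2 + c * t)

theorem hasDerivAt_tiltedGaussian (a c : ℂ) (t : ℝ) :
    HasDerivAt (tiltedGaussian a c) ((c - a * t) * tiltedGaussian a c t) t := by
  have h_id : HasDerivAt (fun s : ℝ => (s : ℂ)) 1 t := ofRealCLM.hasDerivAt
  have h := (((h_id.pow 2).const_mul (-(a / 2))).add (h_id.const_mul c)).cexp
  refine h.congr_deriv ?_
  simp only [tiltedGaussian, Pi.add_apply, Pi.pow_apply]
  ring

theorem norm_tiltedGaussian_add_ofReal (a c : ℂ) (r t : ℝ) :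
    ‖tiltedGaussian a (c + r) t‖ = Real.exp (r * t) * ‖tiltedGaussian a c t‖ := by
  have h : tiltedGaussian a (c + r) t = cexp ((r * t : ℝ) : ℂ) * tiltedGaussian a c t := by
    rw [tiltedGaussian, tiltedGaussian, ← Complex.exp_add]
    push_cast
    ring_nf
  rw [h, norm_mul, norm_exp_ofReal]

theorem abs_pow_le_factorial_mul_exp_add_exp_neg (t : ℝ) (n : ℕ) :
    |t| ^ n ≤ n.factorial * (Real.exp t + Real.exp (-t)) := by
  have h := Real.pow_div_factorial_le_exp |t| (abs_nonneg t) n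
  rw [div_le_iff₀' (by positivity)] at h
  exact h.trans (by gcongr; exact Real.exp_abs_le t)

section Integral

variable {a : ℂ}

theorem integrable_tiltedGaussian (ha : 0 < a.re) (c : ℂ) : Integrable (tiltedGaussian a c) := by
  have ha_half : 0 < (a / 2).re := by simpa using ha
  unfold tiltedGaussian
  simpa only [add_zero] using integrable_cexp_quadratic ha_half c 0

theorem integral_tiltedGaussian (ha : 0 < a.re) (c : ℂ) :
    ∫ t, tiltedGaussian a c t = cexp (c ^ 2 / (2 * a)) * ∫ t, tiltedGaussian a 0 t := by
  have ha_half : (-(a / 2)).re < 0 := by simpa using ha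
  have h (d : ℂ) := integral_cexp_quadratic ha_half d 0
  simp only [add_zero] at h
  have h_exp : 0 - c ^ 2 / (4 * -(a / 2)) = c ^ 2 / (2 * a) := by
    rw [show 4 * -(a / 2) = -(2 * a) by ring, div_neg, zero_sub, neg_neg]
  simp only [tiltedGaussian, h, h_exp]
  simp [mul_comm]

/-- The factor `|t| ^ n` is absorbed by tilting the Gaussian by `e^{±t}`. -/
theorem integrable_pow_mul_tiltedGaussian (ha : 0 < a.re) (c : ℂ) (n : ℕ) :
    Integrable fun t : ℝ => (t : ℂ) ^ n * tiltedGaussian a c t := by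
  have h_tilt (r : ℝ) := (integrable_tiltedGaussian ha (c + r)).norm
  have h_cont : Continuous (tiltedGaussian a c) := by unfold tiltedGaussian; fun_prop
  refine (((h_tilt 1).add (h_tilt (-1))).const_mul (n.factorial : ℝ)).mono'
    (by fun_prop) (.of_forall fun t => ?_)
  calc ‖(t : ℂ) ^ n * tiltedGaussian a c t‖ = |t| ^ n * ‖tiltedGaussian a c t‖ := by simp
    _ ≤ n.factorial * (Real.exp t + Real.exp (-t)) * ‖tiltedGaussian a c t‖ := by
      gcongr
      exact abs_pow_le_factorial_mul_exp_add_exp_neg t n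
    _ = n.factorial * (‖tiltedGaussian a (c + (1 : ℝ)) t‖
          + ‖tiltedGaussian a (c + (-1 : ℝ)) t‖) := by
      rw [norm_tiltedGaussian_add_ofReal, norm_tiltedGaussian_add_ofReal, one_mul, neg_one_mul]
      ring

theorem integrable_eval_mul_tiltedGaussian (ha : 0 < a.re) (c : ℂ) (p : ℂ[X]) :
    Integrable fun t : ℝ => p.eval (t : ℂ) * tiltedGaussian a c t := by
  simp only [eval_eq_sum_range, Finset.sum_mul, mul_assoc]
  exact integrable_finsetSum _ fun n _ =>
    (integrable_pow_mul_tiltedGaussian ha c n).const_mul (p.coeff n)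

/-- Integration of polynomials against `tiltedGaussian a c`, as a linear functional on `ℂ[X]`.
Convergence, hence linearity, rests on `0 < a.re`. -/
def tiltedGaussianFunctional (ha : 0 < a.re) (c : ℂ) : ℂ[X] →ₗ[ℂ] ℂ where
  toFun p := ∫ t : ℝ, p.eval (t : ℂ) * tiltedGaussian a c t
  map_add' p q := by
    simp only [eval_add, add_mul]
    exact integral_add (integrable_eval_mul_tiltedGaussian ha c p)
      (integrable_eval_mul_tiltedGaussian ha c q)
  map_smul' r p := by
    simp only [eval_smul, smul_eq_mul, mul_assoc, integral_const_mul, RingHom.id_apply]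

theorem tiltedGaussianFunctional_apply (ha : 0 < a.re) (c : ℂ) (p : ℂ[X]) :
    tiltedGaussianFunctional ha c p = ∫ t : ℝ, p.eval (t : ℂ) * tiltedGaussian a c t :=
  rfl

theorem tiltedGaussianFunctional_derivative (ha : 0 < a.re) (c : ℂ) (p : ℂ[X]) :
    tiltedGaussianFunctional ha c (derivative p)
      = tiltedGaussianFunctional ha c ((C a * X - C c) * p) := by
  have h_deriv (t : ℝ) : HasDerivAt (fun s : ℝ => p.eval (s : ℂ) * tiltedGaussian a c s)
      ((derivative p - (C a * X - C c) * p).eval (t : ℂ) * tiltedGaussian a c t) t := by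
    refine ((p.hasDerivAt (t : ℂ)).comp_ofReal.mul (hasDerivAt_tiltedGaussian a c t)).congr_deriv ?_
    simp only [eval_sub, eval_mul, eval_C, eval_X]
    ring
  rw [← sub_eq_zero, ← map_sub]
  exact integral_eq_zero_of_hasDerivAt_of_integrable h_deriv
    (integrable_eval_mul_tiltedGaussian ha c _) (integrable_eval_mul_tiltedGaussian ha c p)

theorem steinIdentity_tiltedGaussianFunctional (ha : 0 < a.re) (c : ℂ) :
    SteinIdentity (c / a) a⁻¹ (tiltedGaussianFunctional ha c) := fun p => by
  have ha_ne : a ≠ 0 := by rintro rfl; simp at ha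
  have h := tiltedGaussianFunctional_derivative ha c p
  rw [sub_mul, mul_assoc, map_sub, ← smul_eq_C_mul, ← smul_eq_C_mul, map_smul, map_smul,
    smul_eq_mul, smul_eq_mul] at h
  rw [h, smul_eq_mul, smul_eq_mul]
  field

theorem tiltedGaussianFunctional_eq_smul_comp_taylor (ha : 0 < a.re) (c : ℂ) :
    tiltedGaussianFunctional ha c
      = cexp (c ^ 2 / (2 * a)) • tiltedGaussianFunctional ha 0 ∘ₗ taylor (c / a) := by
  have h_shift := (steinIdentity_tiltedGaussianFunctional ha 0).comp_taylor (c / a)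
  rw [zero_div, zero_add] at h_shift
  refine (steinIdentity_tiltedGaussianFunctional ha c).ext (h_shift.const_smul _) ?_
  simpa [tiltedGaussianFunctional_apply] using integral_tiltedGaussian ha c

end Integral

theorem stmt_16_general {a : ℂ} (ha : 0 < a.re) (x : ℂ) (p : ℂ[X]) :
    (∫ t : ℝ, p.eval (t : ℂ) * cexp (-(a * t ^ 2 / 2)) * cexp (I * (x * t)))
      = cexp (-(x ^ 2 / (2 * a))) *
        ∫ t : ℝ, p.eval (t + I * (x / a)) * cexp (-(a * t ^ 2 / 2)) := by
  have h_weight (y : ℂ) (t : ℝ) :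
      tiltedGaussian a (I * y) t = cexp (-(a * t ^ 2 / 2)) * cexp (I * (y * t)) := by
    rw [tiltedGaussian, ← Complex.exp_add]
    ring_nf
  have h_weight_zero (t : ℝ) : tiltedGaussian a 0 t = cexp (-(a * t ^ 2 / 2)) := by
    simpa using h_weight 0 t
  have h := LinearMap.congr_fun (tiltedGaussianFunctional_eq_smul_comp_taylor ha (I * x)) p
  simpa [tiltedGaussianFunctional_apply, taylor_eval, h_weight, h_weight_zero, mul_pow, neg_div,
    mul_div_assoc, mul_assoc] using h

/-- Lemma 5.3. For `a > 0`, `x ∈ ℝ` and a nonnegative integer `m`,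
`∫ t^m e^{−at²/2} e^{ixt} dt = e^{−x²/(2a)} ∫ (t + ix/a)^m e^{−at²/2} dt`. -/
theorem stmt_16 (a : ℝ) (ha : 0 < a) (x : ℝ) (m : ℕ) :
    (∫ t : ℝ, (t : ℂ) ^ m * Complex.exp (-((a * t ^ 2 / 2 : ℝ) : ℂ)) *
        Complex.exp (Complex.I * ((x * t : ℝ) : ℂ)))
      = Complex.exp (-((x ^ 2 / (2 * a) : ℝ) : ℂ)) *
        ∫ t : ℝ, ((t : ℂ) + Complex.I * ((x / a : ℝ) : ℂ)) ^ m *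
          Complex.exp (-((a * t ^ 2 / 2 : ℝ) : ℂ)) := by
  simpa using stmt_16_general (a := a) ha x (X ^ m)
end
end
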